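/- For every integer k ≥ 3, the 2-skeleton skel₂(β^k) is the disjoint union of the complexes S_{l,j,2k}, taken over all integer pairs (l, j) with 0 < l < j < 2k − l − j and k ∉ {l, j, l + j}, together with the complexes S_{l,2k}, taken over all integers 1 ≤ l ≤ ⌊(k−1)/2⌋; that is, these complexes are pairwise disjoint and their union is skel₂(β^k). -/

import Mathlib

/-- The difference cycle `(a : b : c)` (with `c = n - a - b`) on `ℤ/nℤ`:
the collection of subsets of the form `{i, i + a, i + a + b}` for `i ∈ ℤ/nℤ`. -/
def dc (n a b : ℕ) : Set (Finset (ZMod n)) :=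
  {s | ∃ i : ZMod n, s = {i, i + (a : ZMod n), i + (a : ZMod n) + (b : ZMod n)}}

/-- The 2-skeleton of the `k`-dimensional cross polytope: all 3-element subsets of
`ℤ/2kℤ` containing no pair of the form `{i, i + k}` (a diagonal). -/
def skel2 (k : ℕ) : Set (Finset (ZMod (2 * k))) :=
  {s | s.card = 3 ∧ ∀ i : ZMod (2 * k), ¬(i ∈ s ∧ i + (k : ZMod (2 * k)) ∈ s)}

/-- `S_{l,j,2k}`: the union of the difference cycles `(l : j : 2k−l−j)` and
`(l : 2k−l−j : j)` on `ℤ/2kℤ`. -/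
def Sljn (k l j : ℕ) : Set (Finset (ZMod (2 * k))) :=
  dc (2 * k) l j ∪ dc (2 * k) l (2 * k - l - j)

/-- `S_{l,2k}`: the union of the difference cycles `(l : l : 2(k−l))` and
`(k−l : k−l : 2l)` on `ℤ/2kℤ`. -/
def Sln (k l : ℕ) : Set (Finset (ZMod (2 * k))) :=
  dc (2 * k) l l ∪ dc (2 * k) (k - l) (k - l)

/-- The parameter range for the pairs `(l, j)`: `0 < l < j < 2k − l − j` and
`k ∉ {l, j, l + j}`. -/
def goodPair (k : ℕ) (p : ℕ × ℕ) : Prop :=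
  0 < p.1 ∧ p.1 < p.2 ∧ p.1 + 2 * p.2 < 2 * k ∧ k ≠ p.1 ∧ k ≠ p.2 ∧ k ≠ p.1 + p.2

/-- The parameter range for `l`: `1 ≤ l ≤ ⌊(k−1)/2⌋`. -/
def goodL (k l : ℕ) : Prop := 1 ≤ l ∧ l ≤ (k - 1) / 2

/-!
The vertices of a 3-element subset of `ℤ/nℤ` cut the circle into three gaps `a, b, c` with sum `n`,
and the subset determines these gaps up to cyclic rotation: listing them amounts to choosing the
vertex from which one starts. So the difference cycles partition the 3-element subsets according
to the cyclic gap sequence, and for `n = 2k` a subset avoids the diagonals exactly when no gap is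
`k`. If two gaps agree, rotate them to the front as `(l, l)`: the third gap `2k - 2l` is not `k`, so
`l` or `k - l` is less than `k / 2`, and the subset lies in `S_{l,2k}` or `S_{k-l,2k}` accordingly.
Otherwise rotate the smallest gap to the front: the two orders of the other two gaps are the two
halves of `S_{l,j,2k}`.
-/

/-- The positive integers `a, b, c` are the consecutive gaps between the vertices of a triangle
inscribed in the cyclically ordered set `ℤ/nℤ`. -/
structure IsGapTriple (n a b c : ℕ) : Prop where
  pos_left : 0 < a
  pos_middle : 0 < b
  pos_right : 0 < c
  sum_eq : a + b + c = n

/-- The triangle of the difference cycle `(a : b : n - a - b)` based at the vertex `i`. -/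
def triangle {n : ℕ} (i : ZMod n) (a b : ℕ) : Finset (ZMod n) :=
  {i, i + (a : ZMod n), i + (a : ZMod n) + (b : ZMod n)}

section Triangles

variable {n a b c a' b' c' : ℕ} {i j : ZMod n} {s : Finset (ZMod n)}

theorem IsGapTriple.rotate (h : IsGapTriple n a b c) : IsGapTriple n b c a where
  pos_left := h.pos_middle
  pos_middle := h.pos_right
  pos_right := h.pos_left
  sum_eq := by rw [← h.sum_eq]; ring

theorem mem_triangle : j ∈ triangle i a b ↔ j = i ∨ j = i + a ∨ j = i + a + b := by
  simp only [triangle, Finset.mem_insert, Finset.mem_singleton]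

theorem triangle_rotate (h : a + b + c = n) (i : ZMod n) :
    triangle i a b = triangle (i + (a : ZMod n)) b c := by
  have closes : i + (a : ZMod n) + b + c = i := by
    have sum_eq_zero : ((a + b + c : ℕ) : ZMod n) = 0 := by rw [h, ZMod.natCast_self]
    push_cast at sum_eq_zero
    linear_combination sum_eq_zero
  ext x
  simp only [mem_triangle, closes]
  tauto

theorem dc_rotate (h : a + b + c = n) : dc n a b = dc n b c := by
  ext s
  constructor
  · rintro ⟨i, rfl⟩
    exact ⟨i + a, triangle_rotate h i⟩
  · rintro ⟨i, rfl⟩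
    refine ⟨i - (a : ZMod n), ?_⟩
    change triangle i b c = triangle (i - (a : ZMod n)) a b
    rw [triangle_rotate h, sub_add_cancel]

theorem triangle_eq_of_mem (h : a + b + c = n) (hj : j ∈ triangle i a b) :
    triangle i a b = triangle j a b ∨ triangle i a b = triangle j b c ∨
      triangle i a b = triangle j c a := by
  have rotate_once := triangle_rotate h i
  have rotate_twice : triangle i a b = triangle (i + (a : ZMod n) + (b : ZMod n)) c a :=
    rotate_once.trans (triangle_rotate (by omega) _)
  rcases mem_triangle.mp hj with rfl | rfl | rfl
  · exact Or.inl rfl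
  · exact Or.inr (Or.inl rotate_once)
  · exact Or.inr (Or.inr rotate_twice)

theorem add_natCast_mem_triangle_iff {m : ℕ} (hm : m < n) (hab : a + b < n) :
    i + (m : ZMod n) ∈ triangle i a b ↔ m = 0 ∨ m = a ∨ m = a + b := by
  have natCast_inj_of_lt {x : ℕ} (hx : x < n) : (m : ZMod n) = x ↔ m = x := by
    rw [ZMod.natCast_eq_natCast_iff', Nat.mod_eq_of_lt hm, Nat.mod_eq_of_lt hx]
  rw [mem_triangle, add_assoc, add_right_inj, add_right_inj, add_eq_left, ← Nat.cast_zero,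
    ← Nat.cast_add, natCast_inj_of_lt (by omega), natCast_inj_of_lt (by omega),
    natCast_inj_of_lt hab]

theorem gaps_eq_of_triangle_eq (h : IsGapTriple n a b c) (h' : IsGapTriple n a' b' c')
    (heq : triangle i a b = triangle i a' b') : a = a' ∧ b = b' := by
  obtain ⟨ha, hb, hc, hsum⟩ := h
  obtain ⟨ha', hb', hc', hsum'⟩ := h'
  have mem_iff {m : ℕ} (hm : m < n) : m = 0 ∨ m = a ∨ m = a + b ↔ m = 0 ∨ m = a' ∨ m = a' + b' := by
    rw [← add_natCast_mem_triangle_iff (i := i) hm (by omega), heq,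
      add_natCast_mem_triangle_iff hm (by omega)]
  have first := mem_iff (m := a) (by omega)
  have second := mem_iff (m := a + b) (by omega)
  have first' := mem_iff (m := a') (by omega)
  omega

theorem gaps_rotate_of_mem_dc_of_mem_dc (h : IsGapTriple n a b c) (h' : IsGapTriple n a' b' c')
    (hs : s ∈ dc n a b) (hs' : s ∈ dc n a' b') :
    (a = a' ∧ b = b') ∨ (b = a' ∧ c = b') ∨ (c = a' ∧ a = b') := by
  obtain ⟨i, rfl⟩ := hs
  obtain ⟨j, hj⟩ := hs'
  change triangle i a b = triangle j a' b' at hj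
  have j_mem : j ∈ triangle i a b := hj ▸ mem_triangle.mpr (Or.inl rfl)
  exact (triangle_eq_of_mem h.sum_eq j_mem).imp
    (fun hi => gaps_eq_of_triangle_eq h h' (hi.symm.trans hj))
    (Or.imp (fun hi => gaps_eq_of_triangle_eq h.rotate h' (hi.symm.trans hj))
      (fun hi => gaps_eq_of_triangle_eq h.rotate.rotate h' (hi.symm.trans hj)))

theorem card_triangle (h : IsGapTriple n a b c) (i : ZMod n) : (triangle i a b).card = 3 := by
  have natCast_ne_zero {m : ℕ} (hm : 0 < m) (hmn : m < n) : (m : ZMod n) ≠ 0 := by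
    rw [Ne, ZMod.natCast_eq_zero_iff]
    exact Nat.not_dvd_of_pos_of_lt hm hmn
  obtain ⟨ha, hb, hc, hsum⟩ := h
  refine Finset.card_eq_three.mpr ⟨_, _, _, ?_, ?_, ?_, rfl⟩
  · exact left_ne_add.mpr (natCast_ne_zero ha (by omega))
  · rw [add_assoc, ← Nat.cast_add]
    exact left_ne_add.mpr (natCast_ne_zero (by omega) (by omega))
  · exact left_ne_add.mpr (natCast_ne_zero hb (by omega))

theorem exists_gapTriple_of_card_eq_three [NeZero n] (hs : s.card = 3) :
    ∃ a b c, IsGapTriple n a b c ∧ s ∈ dc n a b := by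
  obtain ⟨x, y, z, hxy, hxz, hyz, rfl⟩ := Finset.card_eq_three.mp hs
  have offsets_ne : (y - x).val ≠ (z - x).val := fun h =>
    hyz (sub_left_injective (ZMod.val_injective n h))
  wlog hlt : (y - x).val < (z - x).val generalizing y z
  · rw [Finset.pair_comm y z] at hs ⊢
    exact this z y hxz hxy hyz.symm hs offsets_ne.symm (by omega)
  have offset_pos : 0 < (y - x).val := ZMod.val_pos.mpr (sub_ne_zero.mpr hxy.symm)
  have offset_lt := ZMod.val_lt (z - x)
  refine ⟨(y - x).val, (z - x).val - (y - x).val, n - (z - x).val,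
    ⟨offset_pos, by omega, by omega, by omega⟩, x, ?_⟩
  simp [Nat.cast_sub hlt.le]

theorem exists_normalized_gapTriple_of_card_eq_three [NeZero n] (hs : s.card = 3) :
    ∃ a b c, IsGapTriple n a b c ∧ s ∈ dc n a b ∧ (a = b ∨ a < b ∧ a < c ∧ b ≠ c) := by
  obtain ⟨a, b, c, h, hs⟩ := exists_gapTriple_of_card_eq_three hs
  have hs_rotate := dc_rotate h.sum_eq ▸ hs
  have hs_rotate_twice := dc_rotate h.rotate.sum_eq ▸ hs_rotate
  have some_rotation_normalized : (a = b ∨ a < b ∧ a < c ∧ b ≠ c) ∨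
      (b = c ∨ b < c ∧ b < a ∧ c ≠ a) ∨ (c = a ∨ c < a ∧ c < b ∧ a ≠ b) := by omega
  rcases some_rotation_normalized with hnorm | hnorm | hnorm
  · exact ⟨a, b, c, h, hs, hnorm⟩
  · exact ⟨b, c, a, h.rotate, hs_rotate, hnorm⟩
  · exact ⟨c, a, b, h.rotate.rotate, hs_rotate_twice, hnorm⟩

end Triangles

section CrossPolytope

variable {k a b c : ℕ}

theorem add_half_mem_triangle_iff (h : IsGapTriple (2 * k) a b c) (i : ZMod (2 * k)) :
    i + (k : ZMod (2 * k)) ∈ triangle i a b ↔ a = k ∨ c = k := by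
  obtain ⟨ha, hb, hc, hsum⟩ := h
  rw [add_natCast_mem_triangle_iff (by omega) (by omega)]
  omega

theorem triangle_mem_skel2_iff (h : IsGapTriple (2 * k) a b c) (i : ZMod (2 * k)) :
    triangle i a b ∈ skel2 k ↔ a ≠ k ∧ b ≠ k ∧ c ≠ k := by
  constructor
  · rintro ⟨-, no_diagonal⟩
    have at_base : ¬(a = k ∨ c = k) := fun hk =>
      no_diagonal i ⟨mem_triangle.mpr (Or.inl rfl), (add_half_mem_triangle_iff h i).mpr hk⟩
    have at_next : ¬(b = k ∨ a = k) := fun hk => by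
      rw [triangle_rotate h.sum_eq] at no_diagonal
      exact no_diagonal (i + (a : ZMod (2 * k))) ⟨mem_triangle.mpr (Or.inl rfl),
        (add_half_mem_triangle_iff h.rotate _).mpr hk⟩
    tauto
  · intro hne
    refine ⟨card_triangle h i, fun x ⟨hx, hxk⟩ => ?_⟩
    rcases triangle_eq_of_mem h.sum_eq hx with hbase | hbase | hbase <;> rw [hbase] at hxk
    · have := (add_half_mem_triangle_iff h x).mp hxk
      tauto
    · have := (add_half_mem_triangle_iff h.rotate x).mp hxk
      tauto
    · have := (add_half_mem_triangle_iff h.rotate.rotate x).mp hxk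
      tauto

theorem dc_subset_skel2 (h : IsGapTriple (2 * k) a b c) (hne : a ≠ k ∧ b ≠ k ∧ c ≠ k) :
    dc (2 * k) a b ⊆ skel2 k := by
  rintro _ ⟨i, rfl⟩
  exact (triangle_mem_skel2_iff h i).mpr hne

theorem exists_mem_Sln {s : Finset (ZMod (2 * k))} {l : ℕ} (hl : 0 < l) (hlk : l < k)
    (hne : 2 * l ≠ k) (hs : s ∈ dc (2 * k) l l) : ∃ l', goodL k l' ∧ s ∈ Sln k l' := by
  rcases hne.lt_or_gt with hlt | hgt
  · exact ⟨l, ⟨hl, by omega⟩, Or.inl hs⟩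
  · refine ⟨k - l, ⟨by omega, by omega⟩, Or.inr ?_⟩
    rwa [Nat.sub_sub_self hlk.le]

theorem exists_mem_Sljn {s : Finset (ZMod (2 * k))} (h : IsGapTriple (2 * k) a b c)
    (hne : a ≠ k ∧ b ≠ k ∧ c ≠ k) (hab : a < b) (hac : a < c) (hbc : b ≠ c)
    (hs : s ∈ dc (2 * k) a b) : ∃ p, goodPair k p ∧ s ∈ Sljn k p.1 p.2 := by
  obtain ⟨ha, -, -, hsum⟩ := h
  rcases hbc.lt_or_gt with hlt | hgt
  · exact ⟨(a, b), by dsimp only [goodPair]; omega, Or.inl hs⟩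
  · refine ⟨(a, c), by dsimp only [goodPair]; omega, Or.inr ?_⟩
    rwa [show 2 * k - a - c = b by omega]

theorem exists_mem_Sljn_or_exists_mem_Sln [NeZero k] {s : Finset (ZMod (2 * k))}
    (hs : s ∈ skel2 k) :
    (∃ p, goodPair k p ∧ s ∈ Sljn k p.1 p.2) ∨ ∃ l, goodL k l ∧ s ∈ Sln k l := by
  obtain ⟨a, b, c, h, hdc, hnorm⟩ := exists_normalized_gapTriple_of_card_eq_three hs.1
  have hne : a ≠ k ∧ b ≠ k ∧ c ≠ k := by
    obtain ⟨i, rfl⟩ := hdc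
    exact (triangle_mem_skel2_iff h i).mp hs
  rcases hnorm with rfl | ⟨hab, hac, hbc⟩
  · obtain ⟨ha, -, hc, hsum⟩ := h
    exact Or.inr (exists_mem_Sln ha (by omega) (by omega) hdc)
  · exact Or.inl (exists_mem_Sljn h hne hab hac hbc hdc)

end CrossPolytope

section Pieces

variable {k l l' : ℕ} {p q : ℕ × ℕ} {s : Finset (ZMod (2 * k))}

theorem goodPair.exists_gapTriple_of_mem_Sljn (hp : goodPair k p) (hs : s ∈ Sljn k p.1 p.2) :
    ∃ b c, IsGapTriple (2 * k) p.1 b c ∧ s ∈ dc (2 * k) p.1 b ∧ (b = p.2 ∨ c = p.2) := by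
  obtain ⟨hl, hlj, hjk, -⟩ := hp
  rcases hs with hs | hs
  · exact ⟨p.2, 2 * k - p.1 - p.2, by constructor <;> omega, hs, Or.inl rfl⟩
  · exact ⟨2 * k - p.1 - p.2, p.2, by constructor <;> omega, hs, Or.inr rfl⟩

theorem goodL.exists_gapTriple_of_mem_Sln (hl : goodL k l) (hs : s ∈ Sln k l) :
    ∃ m c, IsGapTriple (2 * k) m m c ∧ s ∈ dc (2 * k) m m ∧ (m = l ∨ m = k - l) := by
  obtain ⟨hl_pos, hl_le⟩ := hl
  rcases hs with hs | hs
  · exact ⟨l, 2 * (k - l), by constructor <;> omega, hs, Or.inl rfl⟩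
  · exact ⟨k - l, 2 * l, by constructor <;> omega, hs, Or.inr rfl⟩

theorem goodPair.Sljn_subset_skel2 (hp : goodPair k p) : Sljn k p.1 p.2 ⊆ skel2 k := by
  intro s hs
  obtain ⟨b, c, h, hdc, hgap⟩ := hp.exists_gapTriple_of_mem_Sljn hs
  have hsum := h.sum_eq
  obtain ⟨-, -, -, hl, hj, hlj⟩ := hp
  exact dc_subset_skel2 h (by omega) hdc

theorem goodL.Sln_subset_skel2 (hl : goodL k l) : Sln k l ⊆ skel2 k := by
  intro s hs
  obtain ⟨m, c, h, hdc, hgap⟩ := hl.exists_gapTriple_of_mem_Sln hs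
  have hsum := h.sum_eq
  obtain ⟨hl_pos, hl_le⟩ := hl
  exact dc_subset_skel2 h (by omega) hdc

theorem goodPair.disjoint_Sljn (hp : goodPair k p) (hq : goodPair k q) (hne : p ≠ q) :
    Disjoint (Sljn k p.1 p.2) (Sljn k q.1 q.2) := by
  refine Set.disjoint_left.mpr fun s hs hs' => hne (Prod.ext_iff.mpr ?_)
  obtain ⟨b, c, h, hdc, hgap⟩ := hp.exists_gapTriple_of_mem_Sljn hs
  obtain ⟨b', c', h', hdc', hgap'⟩ := hq.exists_gapTriple_of_mem_Sljn hs'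
  have rotated := gaps_rotate_of_mem_dc_of_mem_dc h h' hdc hdc'
  have hsum := h.sum_eq
  have hsum' := h'.sum_eq
  obtain ⟨-, hp_lt, hp_lt', -⟩ := hp
  obtain ⟨-, hq_lt, hq_lt', -⟩ := hq
  omega

theorem goodL.disjoint_Sln (hl : goodL k l) (hl' : goodL k l') (hne : l ≠ l') :
    Disjoint (Sln k l) (Sln k l') := by
  refine Set.disjoint_left.mpr fun s hs hs' => hne ?_
  obtain ⟨m, c, h, hdc, hgap⟩ := hl.exists_gapTriple_of_mem_Sln hs
  obtain ⟨m', c', h', hdc', hgap'⟩ := hl'.exists_gapTriple_of_mem_Sln hs'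
  have same_repeated_gap : m = m' := by
    have rotated := gaps_rotate_of_mem_dc_of_mem_dc h h' hdc hdc'
    omega
  obtain ⟨-, hl_le⟩ := hl
  obtain ⟨-, hl_le'⟩ := hl'
  omega

theorem goodPair.disjoint_Sln (hp : goodPair k p) (hl : goodL k l) :
    Disjoint (Sljn k p.1 p.2) (Sln k l) := by
  refine Set.disjoint_left.mpr fun s hs hs' => ?_
  obtain ⟨b, c, h, hdc, hgap⟩ := hp.exists_gapTriple_of_mem_Sljn hs
  obtain ⟨m, c', h', hdc', -⟩ := hl.exists_gapTriple_of_mem_Sln hs'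
  have repeated_gap : p.1 = b ∨ b = c ∨ c = p.1 := by
    have rotated := gaps_rotate_of_mem_dc_of_mem_dc h h' hdc hdc'
    omega
  have hsum := h.sum_eq
  obtain ⟨-, hp_lt, hp_lt', -⟩ := hp
  omega

end Pieces

/-- For `k ≥ 3`, the 2-skeleton of `β^k` is the disjoint union of the complexes
`S_{l,j,2k}` (over pairs `0 < l < j < 2k−l−j` with `k ∉ {l, j, l+j}`) and `S_{l,2k}`
(over `1 ≤ l ≤ ⌊(k−1)/2⌋`). -/
theorem stmt_13 (k : ℕ) (hk : 3 ≤ k) :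
    (∀ p q : ℕ × ℕ, goodPair k p → goodPair k q → p ≠ q →
      Disjoint (Sljn k p.1 p.2) (Sljn k q.1 q.2)) ∧
    (∀ l l' : ℕ, goodL k l → goodL k l' → l ≠ l' → Disjoint (Sln k l) (Sln k l')) ∧
    (∀ (p : ℕ × ℕ) (l : ℕ), goodPair k p → goodL k l →
      Disjoint (Sljn k p.1 p.2) (Sln k l)) ∧
    skel2 k = (⋃ p ∈ {p : ℕ × ℕ | goodPair k p}, Sljn k p.1 p.2) ∪
      (⋃ l ∈ {l : ℕ | goodL k l}, Sln k l) := by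
  have : NeZero k := ⟨by omega⟩
  refine ⟨fun _ _ hp hq hne => hp.disjoint_Sljn hq hne,
    fun _ _ hl hl' hne => hl.disjoint_Sln hl' hne,
    fun _ _ hp hl => hp.disjoint_Sln hl, Set.Subset.antisymm ?_ ?_⟩
  · intro s hs
    obtain ⟨p, hp, hsp⟩ | ⟨l, hl, hsl⟩ := exists_mem_Sljn_or_exists_mem_Sln hs
    · exact Or.inl (Set.mem_biUnion (x := p) hp hsp)
    · exact Or.inr (Set.mem_biUnion (x := l) hl hsl)
  · exact Set.union_subset (Set.iUnion₂_subset fun _ hp => hp.Sljn_subset_skel2)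
      (Set.iUnion₂_subset fun _ hl => hl.Sln_subset_skel2)
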